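/- Let M : [0,∞) → [2,∞) be a continuous increasing function and set R(t) = w_{M,log}(t). Then for all real α > 0 and β > 1, the integral ∫_0^∞ R(t)^{−α} M(R(t))^{−β} dt is finite. -/

import Mathlib

/-!
Writing `t = M_log(s)` with `s ≥ 1`, so that `R(t) = s`, reduces the theorem to bounding
`s ^ (-α) * M(s) ^ (-β)` by an integrable power of `t`. Logarithms grow slower than any power, hence
`M_log(s) = O(M(s) * (M(s) * s) ^ ε)` for every `ε > 0`. Take
`0 < η < min α (β - 1)`, `γ = β - η > 1` and `ε = η / γ`: raising this to the power `γ` gives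
`t ^ γ = O(M(s) ^ β * s ^ η)`, so the integrand is `O(t ^ (-γ))`.
-/

open MeasureTheory Set Filter
open scoped ENNReal

/-- `M_log(s) = M(s)[log(1+M(s)) + log(1+s)]`. -/
noncomputable def Mlog (M : ℝ → ℝ) (s : ℝ) : ℝ :=
  M s * (Real.log (1 + M s) + Real.log (1 + s))

/-- The weight `w_{M,log}`: it equals `M_log^{−1}(t)` for `t ≥ M_log(1)` and `1` for
`0 ≤ t ≤ M_log(1)`; here `Minv` denotes the inverse function of `M_log`. -/
noncomputable def wMlog (M Minv : ℝ → ℝ) (t : ℝ) : ℝ :=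
  if Mlog M 1 ≤ t then Minv t else 1

lemma one_add_le_one_add_inv_mul {a x : ℝ} (ha : 0 < a) (hx : a ≤ x) :
    1 + x ≤ (1 + a⁻¹) * x := by
  have : 1 ≤ a⁻¹ * x := (one_le_inv_mul₀ ha).2 hx
  linarith

lemma log_one_add_add_log_one_add_le {a b m s ε : ℝ} (ha : 0 < a) (hb : 0 < b) (hm : a ≤ m)
    (hs : b ≤ s) (hε : 0 < ε) :
    Real.log (1 + m) + Real.log (1 + s) ≤ ((1 + a⁻¹) * (1 + b⁻¹) * (m * s)) ^ ε / ε := by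
  have hm0 : 0 < m := ha.trans_le hm
  have hs0 : 0 < s := hb.trans_le hs
  calc Real.log (1 + m) + Real.log (1 + s)
      = Real.log ((1 + m) * (1 + s)) := (Real.log_mul (by positivity) (by positivity)).symm
    _ ≤ Real.log ((1 + a⁻¹) * m * ((1 + b⁻¹) * s)) := by
        gcongr
        · exact one_add_le_one_add_inv_mul ha hm
        · exact one_add_le_one_add_inv_mul hb hs
    _ = Real.log ((1 + a⁻¹) * (1 + b⁻¹) * (m * s)) := by rw [mul_mul_mul_comm]
    _ ≤ ((1 + a⁻¹) * (1 + b⁻¹) * (m * s)) ^ ε / ε :=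
        Real.log_le_rpow_div (by positivity) hε

lemma mul_log_one_add_add_log_one_add_rpow_le {a b m s γ η : ℝ} (ha : 0 < a) (hb : 0 < b)
    (hm : a ≤ m) (hs : b ≤ s) (hγ : 0 < γ) (hη : 0 < η) :
    (m * (Real.log (1 + m) + Real.log (1 + s))) ^ γ ≤
      ((1 + a⁻¹) * (1 + b⁻¹)) ^ η / (η / γ) ^ γ * (s ^ η * m ^ (γ + η)) := by
  have hm0 : 0 < m := ha.trans_le hm
  have hs0 : 0 < s := hb.trans_le hs
  have hlogm : 0 ≤ Real.log (1 + m) := Real.log_nonneg (by linarith)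
  have hlogs : 0 ≤ Real.log (1 + s) := Real.log_nonneg (by linarith)
  set C := (1 + a⁻¹) * (1 + b⁻¹)
  have hC : 0 ≤ C := by positivity
  calc (m * (Real.log (1 + m) + Real.log (1 + s))) ^ γ
      ≤ (m * ((C * (m * s)) ^ (η / γ) / (η / γ))) ^ γ := by
        gcongr
        exact log_one_add_add_log_one_add_le ha hb hm hs (by positivity)
    _ = m ^ γ * ((C * (m * s)) ^ η / (η / γ) ^ γ) := by
        rw [Real.mul_rpow hm0.le (by positivity), Real.div_rpow (by positivity) (by positivity),
          ← Real.rpow_mul (by positivity), div_mul_cancel₀ _ hγ.ne']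
    _ = C ^ η / (η / γ) ^ γ * (s ^ η * m ^ (γ + η)) := by
        rw [Real.mul_rpow hC (by positivity), Real.mul_rpow hm0.le hs0.le, Real.rpow_add hm0]
        ring

section Mlog

variable {M : ℝ → ℝ} {c : ℝ}

lemma Mlog_pos {s : ℝ} (hM : 0 < M s) (hs : 0 ≤ s) : 0 < Mlog M s :=
  mul_pos hM <|
    add_pos_of_pos_of_nonneg (Real.log_pos (by linarith)) (Real.log_nonneg (by linarith))

lemma continuousOn_Mlog {S : Set ℝ} (hMcont : ContinuousOn M S) (hM : ∀ s ∈ S, 1 + M s ≠ 0)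
    (hS : ∀ s ∈ S, 1 + s ≠ 0) : ContinuousOn (Mlog M) S :=
  hMcont.mul <| ((continuousOn_const.add hMcont).log hM).add
    ((continuousOn_const.add continuousOn_id).log hS)

lemma tendsto_Mlog_atTop (hc : 0 < c) (hM : ∀ᶠ s in atTop, c ≤ M s) :
    Tendsto (Mlog M) atTop atTop := by
  have hlog : Tendsto (fun s : ℝ => c * Real.log (1 + s)) atTop atTop :=
    (Real.tendsto_log_atTop.comp (tendsto_atTop_add_const_left _ 1 tendsto_id)).const_mul_atTop hc
  refine tendsto_atTop_mono' _ ?_ hlog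
  filter_upwards [hM, eventually_ge_atTop 0] with s hMs hs
  have hlogM : 0 ≤ Real.log (1 + M s) := Real.log_nonneg (by linarith)
  have hlogs : 0 ≤ Real.log (1 + s) := Real.log_nonneg (by linarith)
  exact mul_le_mul hMs (by linarith) hlogs (by linarith)

lemma surjOn_Mlog {a : ℝ} (ha : 0 ≤ a) (hc : 0 < c) (hM : ∀ s ∈ Ici a, c ≤ M s)
    (hMcont : ContinuousOn M (Ici a)) : SurjOn (Mlog M) (Ici a) (Ici (Mlog M a)) := by
  have hcont : ContinuousOn (Mlog M) (Ici a) :=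
    continuousOn_Mlog hMcont (fun s hs => by linarith [hM s hs])
      (fun s hs => by linarith [mem_Ici.1 hs])
  exact isPreconnected_Ici.intermediate_value_Ici self_mem_Ici
    (le_principal_iff.2 (Ici_mem_atTop a)) hcont
    (tendsto_Mlog_atTop hc ((eventually_ge_atTop a).mono hM))

lemma exists_rpow_neg_mul_rpow_neg_le_Mlog_rpow_neg {α β : ℝ} (hc : 0 < c)
    (hM : ∀ s ∈ Ici (1 : ℝ), c ≤ M s) (hα : 0 < α) (hβ : 1 < β) :
    ∃ γ K : ℝ, 1 < γ ∧ ∀ s ∈ Ici (1 : ℝ), s ^ (-α) * M s ^ (-β) ≤ K * Mlog M s ^ (-γ) := by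
  obtain ⟨η, hη, hηmin⟩ := exists_between (lt_min hα (sub_pos.2 hβ))
  obtain ⟨hηα, hηβ⟩ := lt_min_iff.1 hηmin
  have hγ : 1 < β - η := by linarith
  have hγ0 : 0 < β - η := one_pos.trans hγ
  set K := ((1 + c⁻¹) * (1 + 1⁻¹)) ^ η / (η / (β - η)) ^ (β - η)
  refine ⟨β - η, K, hγ, fun s (hs : 1 ≤ s) => ?_⟩
  have hs0 : 0 < s := by linarith
  have hMs : 0 < M s := hc.trans_le (hM s hs)
  have : 0 ≤ K := by positivity
  have hle : Mlog M s ^ (β - η) ≤ K * (s ^ α * M s ^ β) :=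
    calc Mlog M s ^ (β - η)
        ≤ K * (s ^ η * M s ^ (β - η + η)) :=
          mul_log_one_add_add_log_one_add_rpow_le hc one_pos (hM s hs) hs hγ0 hη
      _ ≤ K * (s ^ α * M s ^ β) := by
          rw [sub_add_cancel]
          gcongr
  have hlog := Mlog_pos hMs hs0.le
  rw [Real.rpow_neg hs0.le, Real.rpow_neg hMs.le, Real.rpow_neg hlog.le, ← mul_inv,
    ← div_eq_mul_inv, le_div_iff₀ (by positivity), inv_mul_le_iff₀ (by positivity), mul_comm _ K]
  exact hle

end Mlog

lemma setLIntegral_Ici_ofReal_lt_top_of_le_rpow_neg {f : ℝ → ℝ} {T K γ : ℝ} (hT : 0 < T)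
    (hγ : 1 < γ) (hf : ∀ t ∈ Ici T, f t ≤ K * t ^ (-γ)) :
    ∫⁻ t in Ici T, ENNReal.ofReal (f t) < ⊤ := by
  have hint : IntegrableOn (fun t : ℝ => K * t ^ (-γ)) (Ici T) :=
    (integrableOn_Ici_iff_integrableOn_Ioi ..).2
      ((integrableOn_Ioi_rpow_of_lt (by linarith) hT).const_mul K)
  exact (setLIntegral_mono' measurableSet_Ici fun t ht =>
    ENNReal.ofReal_le_ofReal (hf t ht)).trans_lt hint.lintegral_lt_top

lemma wMlog_of_le {M Minv : ℝ → ℝ} {t : ℝ} (ht : Mlog M 1 ≤ t) : wMlog M Minv t = Minv t :=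
  if_pos ht

lemma wMlog_of_lt {M Minv : ℝ → ℝ} {t : ℝ} (ht : t < Mlog M 1) : wMlog M Minv t = 1 :=
  if_neg ht.not_ge

lemma setLIntegral_Ico_comp_wMlog_lt_top (M Minv f : ℝ → ℝ) :
    ∫⁻ t in Ico 0 (Mlog M 1), ENNReal.ofReal (f (wMlog M Minv t)) < ⊤ := by
  rw [setLIntegral_congr_fun measurableSet_Ico fun t ht => by rw [wMlog_of_lt ht.2],
    setLIntegral_const, Real.volume_Ico]
  exact ENNReal.mul_lt_top ENNReal.ofReal_lt_top ENNReal.ofReal_lt_top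

theorem statement_19_general {M Minv : ℝ → ℝ} {c α β : ℝ} (hc : 0 < c)
    (hM : ∀ s ∈ Ici (1 : ℝ), c ≤ M s) (hmaps : MapsTo Minv (Ici (Mlog M 1)) (Ici 1))
    (hinv : RightInvOn Minv (Mlog M) (Ici (Mlog M 1))) (hα : 0 < α) (hβ : 1 < β) :
    ∫⁻ t in Ici (0 : ℝ),
      ENNReal.ofReal (wMlog M Minv t ^ (-α) * M (wMlog M Minv t) ^ (-β)) < ⊤ := by
  have hT : 0 < Mlog M 1 := Mlog_pos (hc.trans_le (hM 1 self_mem_Ici)) zero_le_one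
  obtain ⟨γ, K, hγ, hK⟩ := exists_rpow_neg_mul_rpow_neg_le_Mlog_rpow_neg hc hM hα hβ
  have htail : ∀ t ∈ Ici (Mlog M 1),
      wMlog M Minv t ^ (-α) * M (wMlog M Minv t) ^ (-β) ≤ K * t ^ (-γ) := fun t ht => by
    simpa only [wMlog_of_le ht, hinv ht] using hK (Minv t) (hmaps ht)
  rw [← Ico_union_Ici_eq_Ici hT.le]
  refine (lintegral_union_le _ _ _).trans_lt (ENNReal.add_lt_top.2 ⟨?_, ?_⟩)
  · exact setLIntegral_Ico_comp_wMlog_lt_top M Minv fun s => s ^ (-α) * M s ^ (-β)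
  · exact setLIntegral_Ici_ofReal_lt_top_of_le_rpow_neg hT hγ htail

/-- For `R(t) = w_{M,log}(t)`, `α > 0` and `β > 1`, the integral
`∫_0^∞ R(t)^{−α} M(R(t))^{−β} dt` is finite. -/
theorem statement_19
    (M : ℝ → ℝ) (hM2 : ∀ s : ℝ, 0 ≤ s → 2 ≤ M s)
    (hMcont : ContinuousOn M (Ici 0)) (hMmono : MonotoneOn M (Ici 0))
    (Minv : ℝ → ℝ)
    (hMinv₁ : ∀ s : ℝ, 0 ≤ s → Minv (Mlog M s) = s)
    (hMinv₂ : ∀ t : ℝ, Mlog M 0 ≤ t → Mlog M (Minv t) = t) :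
    ∀ α β : ℝ, 0 < α → 1 < β →
      ∫⁻ t in Ici (0:ℝ),
          ENNReal.ofReal
            (wMlog M Minv t ^ (-α) * M (wMlog M Minv t) ^ (-β)) < ⊤ := by
  have hIci : Ici (1 : ℝ) ⊆ Ici 0 := Ici_subset_Ici.2 zero_le_one
  have hM : ∀ s ∈ Ici (1 : ℝ), 2 ≤ M s := fun s hs => hM2 s (hIci hs)
  have hinv : LeftInvOn Minv (Mlog M) (Ici 1) := fun s hs => hMinv₁ s (hIci hs)
  have hsurj := surjOn_Mlog zero_le_one two_pos hM (hMcont.mono hIci)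
  exact fun α β => statement_19_general two_pos hM (hinv.mapsTo hsurj)
    (hinv.rightInvOn_image.mono hsurj)
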